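/- Let ρ : M → ℝ be a mapping. Then ρ commutes with the set 𝒰 of utility transforms, in the sense that F_U ∘ ρ = ρ ∘ 𝒰 (i.e., for every u ∈ F_U there exists ψ ∈ F_U with ψ ∘ ρ = ρ ∘ T^u, and for every ψ ∈ F_U there exists u ∈ F_U with ψ ∘ ρ = ρ ∘ T^u), if and only if there exist a strictly monotone, continuous, surjective function h : ℝ → ℝ and a quantile functional ρ̂ : M → ℝ such that ρ = h ∘ ρ̂, where ρ̂ is either a left quantile F ↦ F_L^{-1}(p) for some fixed p ∈ (0,1] or a right quantile F ↦ F_R^{-1}(p) for some fixed p ∈ [0,1). -/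

import Mathlib

/-!
Both kinds of quantile have the form `F ↦ inf {x | F x ∈ S}` for an upper set `S` with `0 ∉ S` and
`1 ∈ S`.  If `u` is increasing, then `F y ≤ T^u F x` when `u y ≤ x`, and `T^u F x ≤ F y` when
`x < u y`; with `u` continuous, this moves the infimum `q` for `F` to the infimum `u q` for `T^u F`.
So quantiles are equivariant, and for `ρ = h ∘ ρ̂` conjugation by `h` turns `u` into `ψ` and back.

Conversely, let `ρ` commute with the utility transforms, and let `g x` be its value at the point
mass at `x`.  Constant `ψ` show that `g` is surjective.  Since utility functions can move any pair
`x < y` to any pair `a ≤ b`, the relation `ψ ∘ g = g ∘ u` makes `g` injective and monotone or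
antitone, and `r = g⁻¹ ∘ ρ` is equivariant.

To see that an equivariant `r` is a quantile, push `F` forward under the increasing map that opens
a gap of length `1` just to the right of `t`, and let `z` be the value of `r` there.  Collapsing the
gap gives back `F`, so `r F` is `z` with the gap collapsed; collapsing everything but the gap gives
the distribution with mass `F t` at `0` and `1 - F t` at `1`, on which `r` is then positive exactly
when `t < z`.  If `S` is the set of `s` such that `r ≤ 0` on the distribution with masses `s` and
`1 - s`, it follows that `{x | F x ∈ S}` is a half-line starting at `r F`.  Taking `F` uniform on
`[0, 1]` shows that `S ∩ [0, 1]` is itself the part of a half-line in `[0, 1]`.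
-/

open MeasureTheory Filter Topology Set

noncomputable section

/-- The set of cdfs of compactly supported probability distributions on ℝ:
increasing, right-continuous, equal to `0` for all sufficiently small `x` and
equal to `1` for all sufficiently large `x`. -/
def mSet : Set (ℝ → ℝ) :=
  {F | Monotone F ∧ (∀ x, ContinuousWithinAt F (Set.Ici x) x) ∧
    (∃ a, ∀ x ≤ a, F x = 0) ∧ (∃ b, ∀ x, b ≤ x → F x = 1)}

/-- The set of cdfs of all probability distributions on ℝ: increasing,
right-continuous, with limit `0` at `-∞` and limit `1` at `+∞`. -/
def m0Set : Set (ℝ → ℝ) :=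
  {F | Monotone F ∧ (∀ x, ContinuousWithinAt F (Set.Ici x) x) ∧
    Tendsto F atBot (𝓝 0) ∧ Tendsto F atTop (𝓝 1)}

/-- A utility function: increasing (non-strict) and continuous. -/
def IsUF (u : ℝ → ℝ) : Prop := Monotone u ∧ Continuous u

/-- An increasing and left-continuous function on ℝ. -/
def IsLeftCtsIncr (u : ℝ → ℝ) : Prop :=
  Monotone u ∧ ∀ x, ContinuousWithinAt u (Set.Iic x) x

/-- A distortion function: an increasing function `d : [0,1] → [0,1]` with
`d 0 = 0` and `d 1 = 1` (values outside `[0,1]` are irrelevant). -/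
def IsDF (d : ℝ → ℝ) : Prop :=
  MonotoneOn d (Set.Icc 0 1) ∧ d 0 = 0 ∧ d 1 = 1

/-- Right-continuity of a distortion function on `[0,1)`. -/
def DFRightCts (d : ℝ → ℝ) : Prop :=
  ∀ x ∈ Set.Ico (0:ℝ) 1, ContinuousWithinAt d (Set.Ioi x) x

/-- A distortion function with moreover `d(0+) = 0` and `d(1-) = 1`. -/
def IsDFhat (d : ℝ → ℝ) : Prop :=
  IsDF d ∧ Tendsto d (𝓝[>] (0:ℝ)) (𝓝 0) ∧ Tendsto d (𝓝[<] (1:ℝ)) (𝓝 1)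

/-- The probability distortion generated by `d`:  `T_d F x = (d ∘ F)(x+)`,
the right limit of `d ∘ F` at `x`. -/
noncomputable def distortT (d F : ℝ → ℝ) : ℝ → ℝ :=
  fun x => Function.rightLim (d ∘ F) x

/-- The utility transform `T^u`: it maps a cdf `F` to the cdf of the
pushforward under `u` of the probability measure with cdf `F`. -/
noncomputable def utilityT (u F : ℝ → ℝ) : ℝ → ℝ := by
  classical
  exact
    if h : Monotone F ∧ ∀ x, ContinuousWithinAt F (Set.Ici x) x then
      fun x => ((StieltjesFunction.measure ⟨F, h.1, h.2⟩).map u (Set.Iic x)).toReal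
    else F

/-- Left quantile `F_L^{-1}(p) = inf {x | F x ≥ p}`. -/
noncomputable def leftQ (F : ℝ → ℝ) (p : ℝ) : ℝ := sInf {x | p ≤ F x}

/-- Right quantile `F_R^{-1}(p) = inf {x | F x > p}`. -/
noncomputable def rightQ (F : ℝ → ℝ) (p : ℝ) : ℝ := sInf {x | p < F x}

open ProbabilityTheory (cdf)

/-! ### Utility transforms of cdfs -/

lemma mSet_subset_m0Set : mSet ⊆ m0Set := by
  rintro F ⟨hmono, hcont, ⟨a, ha⟩, ⟨b, hb⟩⟩
  refine ⟨hmono, hcont, tendsto_const_nhds.congr' ?_, tendsto_const_nhds.congr' ?_⟩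
  · filter_upwards [eventually_le_atBot a] with x hx using (ha x hx).symm
  · filter_upwards [eventually_ge_atTop b] with x hx using (hb x hx).symm

lemma exists_cdf_eq {F : ℝ → ℝ} (hF : F ∈ m0Set) :
    ∃ μ : Measure ℝ, IsProbabilityMeasure μ ∧ cdf μ = F := by
  obtain ⟨hmono, hcont, hbot, htop⟩ := hF
  let f : StieltjesFunction ℝ := ⟨F, hmono, hcont⟩
  exact ⟨f.measure, f.isProbabilityMeasure hbot htop,
    congrArg _ (ProbabilityTheory.cdf_measure_stieltjesFunction f hbot htop)⟩

lemma mem_Icc_of_mem_m0Set {F : ℝ → ℝ} (hF : F ∈ m0Set) (x : ℝ) : F x ∈ Icc (0 : ℝ) 1 := by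
  obtain ⟨μ, -, rfl⟩ := exists_cdf_eq hF
  exact ⟨ProbabilityTheory.cdf_nonneg μ x, ProbabilityTheory.cdf_le_one μ x⟩

lemma utilityT_cdf (μ : Measure ℝ) [IsProbabilityMeasure μ] {u : ℝ → ℝ} (hu : AEMeasurable u μ) :
    utilityT u (cdf μ) = cdf (μ.map u) := by
  have := Measure.isProbabilityMeasure_map hu
  have hcdf : Monotone (cdf μ) ∧ ∀ x, ContinuousWithinAt (cdf μ) (Ici x) x :=
    ⟨ProbabilityTheory.monotone_cdf μ, (cdf μ).right_continuous⟩
  have hmeasure : StieltjesFunction.measure ⟨cdf μ, hcdf.1, hcdf.2⟩ = μ :=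
    ProbabilityTheory.measure_cdf μ
  funext x
  rw [utilityT, dif_pos hcdf, hmeasure, ProbabilityTheory.cdf_eq_real, Measure.real]

lemma utilityT_cdf_apply (μ : Measure ℝ) [IsProbabilityMeasure μ] {u : ℝ → ℝ} (hu : Measurable u)
    (x : ℝ) : utilityT u (cdf μ) x = μ.real (u ⁻¹' Iic x) := by
  have := Measure.isProbabilityMeasure_map (μ := μ) hu.aemeasurable
  rw [utilityT_cdf μ hu.aemeasurable, ProbabilityTheory.cdf_eq_real,
    map_measureReal_apply hu measurableSet_Iic]

lemma utilityT_id {F : ℝ → ℝ} (hF : F ∈ m0Set) : utilityT id F = F := by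
  obtain ⟨μ, _, rfl⟩ := exists_cdf_eq hF
  rw [utilityT_cdf μ aemeasurable_id, Measure.map_id]

lemma utilityT_utilityT {F u v : ℝ → ℝ} (hF : F ∈ m0Set) (hu : Measurable u) (hv : Measurable v) :
    utilityT u (utilityT v F) = utilityT (u ∘ v) F := by
  obtain ⟨μ, _, rfl⟩ := exists_cdf_eq hF
  have := Measure.isProbabilityMeasure_map (μ := μ) hv.aemeasurable
  rw [utilityT_cdf μ hv.aemeasurable, utilityT_cdf _ hu.aemeasurable, Measure.map_map hu hv,
    utilityT_cdf μ (hu.comp hv).aemeasurable]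

lemma le_utilityT {F u : ℝ → ℝ} (hF : F ∈ m0Set) (hu : Monotone u) {x y : ℝ} (h : u y ≤ x) :
    F y ≤ utilityT u F x := by
  obtain ⟨μ, _, rfl⟩ := exists_cdf_eq hF
  rw [utilityT_cdf_apply μ hu.measurable, ProbabilityTheory.cdf_eq_real]
  exact measureReal_mono fun z hz => (hu hz).trans h

lemma utilityT_le {F u : ℝ → ℝ} (hF : F ∈ m0Set) (hu : Monotone u) {x y : ℝ} (h : x < u y) :
    utilityT u F x ≤ F y := by
  obtain ⟨μ, _, rfl⟩ := exists_cdf_eq hF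
  rw [utilityT_cdf_apply μ hu.measurable, ProbabilityTheory.cdf_eq_real]
  exact measureReal_mono fun z hz => (hu.reflect_lt (hz.trans_lt h)).le

lemma utilityT_mem_m0Set {F u : ℝ → ℝ} (hF : F ∈ m0Set) (hu : Measurable u) :
    utilityT u F ∈ m0Set := by
  obtain ⟨μ, _, rfl⟩ := exists_cdf_eq hF
  rw [utilityT_cdf μ hu.aemeasurable]
  exact ⟨ProbabilityTheory.monotone_cdf _, (cdf _).right_continuous,
    ProbabilityTheory.tendsto_cdf_atBot _, ProbabilityTheory.tendsto_cdf_atTop _⟩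

lemma utilityT_mem_mSet {F u : ℝ → ℝ} (hF : F ∈ mSet) (hu : Monotone u) :
    utilityT u F ∈ mSet := by
  have hF₀ := mSet_subset_m0Set hF
  have hT := utilityT_mem_m0Set hF₀ hu.measurable
  obtain ⟨-, -, ⟨a, ha⟩, ⟨b, hb⟩⟩ := hF
  refine ⟨hT.1, hT.2.1, ⟨u a - 1, fun x hx => ?_⟩, ⟨u b, fun x hx => ?_⟩⟩
  · have hle := utilityT_le hF₀ hu (show x < u a by linarith)
    exact le_antisymm (hle.trans_eq (ha a le_rfl)) (mem_Icc_of_mem_m0Set hT x).1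
  · have hle := le_utilityT hF₀ hu hx
    exact le_antisymm (mem_Icc_of_mem_m0Set hT x).2 ((hb b le_rfl).symm.trans_le hle)

/-! ### Quantiles are equivariant -/

/-- A functional on distributions is a quantile if it agrees on `mSet` with the left quantile at
some level in `(0, 1]` or with the right quantile at some level in `[0, 1)`. -/
def IsQuantile (q : (ℝ → ℝ) → ℝ) : Prop :=
  (∃ p ∈ Ioc (0 : ℝ) 1, ∀ F ∈ mSet, q F = leftQ F p) ∨
    ∃ p ∈ Ico (0 : ℝ) 1, ∀ F ∈ mSet, q F = rightQ F p

/-- A functional on distributions is equivariant if it intertwines the transform `T^u` with `u`,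
for every utility function `u`.  Values outside `mSet` are irrelevant. -/
def IsEquivariant (r : (ℝ → ℝ) → ℝ) : Prop :=
  ∀ u, IsUF u → ∀ F ∈ mSet, r (utilityT u F) = u (r F)

lemma isGLB_preimage_utilityT {F u : ℝ → ℝ} {S : Set ℝ} {q : ℝ} (hF : F ∈ m0Set) (hu : IsUF u)
    (hS : IsUpperSet S) (hq : IsGLB (F ⁻¹' S) q) : IsGLB (utilityT u F ⁻¹' S) (u q) := by
  have himage : IsGLB (u '' (F ⁻¹' S)) (u q) :=
    hq.isGLB_of_tendsto (hu.1.monotoneOn _) hq.nonempty hu.2.continuousWithinAt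
  refine himage.of_subset_of_superset isGLB_Ici ?_ ?_
  · rintro _ ⟨y, hy, rfl⟩
    exact hS (le_utilityT hF hu.1 le_rfl) hy
  · intro x hx
    by_contra! hlt
    obtain ⟨y, hyq, hxy⟩ := ((hu.2.tendsto q).eventually_const_lt (not_le.1 hlt)).exists_lt
    exact hyq.not_ge (hq.1 (hS (utilityT_le hF hu.1 hxy) hx))

lemma isGLB_sInf_preimage {F : ℝ → ℝ} {S : Set ℝ} (hF : F ∈ mSet) (h0 : 0 ∉ S) (h1 : 1 ∈ S) :
    IsGLB (F ⁻¹' S) (sInf (F ⁻¹' S)) := by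
  obtain ⟨-, -, ⟨a, ha⟩, ⟨b, hb⟩⟩ := hF
  refine isGLB_csInf ⟨b, by rwa [mem_preimage, hb b le_rfl]⟩ ⟨a, fun x hx => ?_⟩
  by_contra! hlt
  exact h0 (ha x hlt.le ▸ hx)

lemma isEquivariant_sInf_preimage {S : Set ℝ} (hS : IsUpperSet S) (h0 : 0 ∉ S) (h1 : 1 ∈ S) :
    IsEquivariant fun F => sInf (F ⁻¹' S) := fun _ hu _ hF =>
  (isGLB_sInf_preimage (utilityT_mem_mSet hF hu.1) h0 h1).unique <|
    isGLB_preimage_utilityT (mSet_subset_m0Set hF) hu hS (isGLB_sInf_preimage hF h0 h1)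

lemma IsEquivariant.congr {q r : (ℝ → ℝ) → ℝ} (hr : IsEquivariant r)
    (h : ∀ F ∈ mSet, q F = r F) : IsEquivariant q := fun u hu F hF => by
  rw [h _ (utilityT_mem_mSet hF hu.1), hr u hu F hF, h F hF]

lemma IsQuantile.isEquivariant {q : (ℝ → ℝ) → ℝ} (hq : IsQuantile q) : IsEquivariant q := by
  rcases hq with ⟨p, hp, hq⟩ | ⟨p, hp, hq⟩
  · exact (isEquivariant_sInf_preimage (isUpperSet_Ici p) (not_le.2 hp.1) hp.2).congr hq
  · exact (isEquivariant_sInf_preimage (isUpperSet_Ioi p) (not_lt.2 hp.1) hp.2).congr hq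

/-! ### Equivariant functionals are quantiles -/

/-- The retraction of `ℝ` onto `[0, 1]`, which is at the same time a utility function and the cdf
of the uniform distribution on `[0, 1]`. -/
def clamp (x : ℝ) : ℝ := max 0 (min 1 x)

lemma clamp_mem_Icc (x : ℝ) : clamp x ∈ Icc (0 : ℝ) 1 :=
  ⟨le_max_left _ _, max_le zero_le_one (min_le_left _ _)⟩

lemma clamp_of_mem_Icc {x : ℝ} (hx : x ∈ Icc (0 : ℝ) 1) : clamp x = x := by
  rw [clamp, min_eq_right hx.2, max_eq_right hx.1]

lemma clamp_of_nonpos {x : ℝ} (hx : x ≤ 0) : clamp x = 0 :=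
  max_eq_left ((min_le_right _ _).trans hx)

lemma clamp_of_one_le {x : ℝ} (hx : 1 ≤ x) : clamp x = 1 := by
  rw [clamp, min_eq_left hx, max_eq_right zero_le_one]

lemma clamp_pos {x : ℝ} : 0 < clamp x ↔ 0 < x := by
  simp [clamp]

lemma isUF_clamp : IsUF clamp :=
  ⟨fun _ _ h => max_le_max_left 0 (min_le_min_left 1 h), by unfold clamp; fun_prop⟩

lemma clamp_mem_mSet : clamp ∈ mSet :=
  ⟨isUF_clamp.1, fun _ => isUF_clamp.2.continuousWithinAt, ⟨0, fun _ => clamp_of_nonpos⟩,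
    ⟨1, fun _ => clamp_of_one_le⟩⟩

lemma clamp_comp_of_mem_m0Set {F : ℝ → ℝ} (hF : F ∈ m0Set) : clamp ∘ F = F :=
  funext fun x => clamp_of_mem_Icc (mem_Icc_of_mem_m0Set hF x)

lemma mem_Ioc_of_preimage_clamp_eq_Ici {S : Set ℝ} {p : ℝ} (h : clamp ⁻¹' S = Ici p) :
    p ∈ Ioc (0 : ℝ) 1 := by
  have hclamp (x : ℝ) : p ≤ x ↔ p ≤ clamp x := by
    rw [← mem_Ici, ← mem_Ici, ← h, mem_preimage, mem_preimage,
      clamp_of_mem_Icc (clamp_mem_Icc x)]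
  constructor
  · have : clamp (p - 1) < p := not_le.1 fun hle => by linarith [(hclamp (p - 1)).2 hle]
    exact (clamp_mem_Icc _).1.trans_lt this
  · exact ((hclamp p).1 le_rfl).trans (clamp_mem_Icc p).2

lemma mem_Ico_of_preimage_clamp_eq_Ioi {S : Set ℝ} {p : ℝ} (h : clamp ⁻¹' S = Ioi p) :
    p ∈ Ico (0 : ℝ) 1 := by
  have hclamp (x : ℝ) : p < x ↔ p < clamp x := by
    rw [← mem_Ioi, ← mem_Ioi, ← h, mem_preimage, mem_preimage,
      clamp_of_mem_Icc (clamp_mem_Icc x)]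
  constructor
  · exact (clamp_mem_Icc p).1.trans (not_lt.1 fun hlt => lt_irrefl p ((hclamp p).2 hlt))
  · exact ((hclamp (p + 1)).1 (lt_add_one p)).trans_le (clamp_mem_Icc _).2

/-- The increasing function that opens a gap of length `1` just to the right of `t`. -/
def insertGap (t x : ℝ) : ℝ := if x ≤ t then x else x + 1

/-- The utility function that collapses `[t, t + 1]` to `t`, undoing `insertGap t`. -/
def collapseGap (t x : ℝ) : ℝ := max (min x t) (x - 1)

/-- The cdf of the distribution with mass `s` at `0` and mass `1 - s` at `1`. -/
def twoPointCdf (s x : ℝ) : ℝ := if x < 0 then 0 else if x < 1 then s else 1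

lemma monotone_insertGap (t : ℝ) : Monotone (insertGap t) := by
  intro x y h
  unfold insertGap
  split_ifs <;> linarith

lemma isUF_collapseGap (t : ℝ) : IsUF (collapseGap t) :=
  ⟨fun _ _ h => max_le_max (min_le_min_right t h) (by linarith), by unfold collapseGap; fun_prop⟩

lemma isUF_clamp_sub (t : ℝ) : IsUF fun x => clamp (x - t) :=
  ⟨fun _ _ h => isUF_clamp.1 (by linarith), isUF_clamp.2.comp (by fun_prop)⟩

lemma collapseGap_comp_insertGap (t : ℝ) : collapseGap t ∘ insertGap t = id := by
  funext x
  simp only [Function.comp_apply, insertGap, collapseGap, id]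
  split_ifs with h
  · rw [min_eq_left h, max_eq_left (by linarith)]
  · rw [min_eq_right (by linarith), add_sub_cancel_right, max_eq_right (by linarith)]

lemma clamp_sub_comp_insertGap (t : ℝ) :
    (fun x => clamp (x - t)) ∘ insertGap t = (Ioi t).indicator 1 := by
  funext x
  by_cases h : x ≤ t
  · simp [insertGap, h, clamp_of_nonpos]
  · rw [Function.comp_apply, insertGap, if_neg h, clamp_of_one_le (by linarith)]
    simp [not_le.1 h]

lemma utilityT_indicator_Ioi {F : ℝ → ℝ} (hF : F ∈ m0Set) (t : ℝ) :
    utilityT ((Ioi t).indicator 1) F = twoPointCdf (F t) := by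
  obtain ⟨μ, _, rfl⟩ := exists_cdf_eq hF
  have hmeas : Measurable ((Ioi t).indicator (1 : ℝ → ℝ)) :=
    measurable_one.indicator measurableSet_Ioi
  funext x
  rw [utilityT_cdf_apply μ hmeas, twoPointCdf]
  split_ifs with h0 h1
  · have : (Ioi t).indicator (1 : ℝ → ℝ) ⁻¹' Iic x = ∅ :=
      eq_empty_of_forall_notMem fun y hy =>
        (h0.trans_le (indicator_nonneg (fun _ _ => zero_le_one) y)).not_ge hy
    rw [this, measureReal_empty]
  · have : (Ioi t).indicator (1 : ℝ → ℝ) ⁻¹' Iic x = Iic t := by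
      ext y
      rcases le_or_gt y t with hy | hy
      · simp [hy, not_lt.1 h0]
      · simp [hy, hy.not_ge, h1.not_ge]
    rw [this, ProbabilityTheory.cdf_eq_real]
  · have : (Ioi t).indicator (1 : ℝ → ℝ) ⁻¹' Iic x = univ :=
      eq_univ_of_forall fun y =>
        (indicator_le_self' (fun _ _ => zero_le_one) y).trans (not_lt.1 h1)
    rw [this, probReal_univ]

namespace IsEquivariant

variable {r : (ℝ → ℝ) → ℝ} {F : ℝ → ℝ}

lemma exists_eq_collapseGap (hr : IsEquivariant r) (hF : F ∈ mSet) (t : ℝ) :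
    ∃ z, r F = collapseGap t z ∧ r (twoPointCdf (F t)) = clamp (z - t) := by
  have hF₀ := mSet_subset_m0Set hF
  have hgap := utilityT_mem_mSet hF (monotone_insertGap t)
  refine ⟨r (utilityT (insertGap t) F), ?_, ?_⟩
  · rw [← hr _ (isUF_collapseGap t) _ hgap, utilityT_utilityT hF₀ (isUF_collapseGap t).1.measurable
      (monotone_insertGap t).measurable, collapseGap_comp_insertGap, utilityT_id hF₀]
  · rw [← hr _ (isUF_clamp_sub t) _ hgap, utilityT_utilityT hF₀ (isUF_clamp_sub t).1.measurable
      (monotone_insertGap t).measurable, clamp_sub_comp_insertGap, utilityT_indicator_Ioi hF₀]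

lemma le_of_twoPointCdf_nonpos (hr : IsEquivariant r) (hF : F ∈ mSet) {t : ℝ}
    (h : r (twoPointCdf (F t)) ≤ 0) : r F ≤ t := by
  obtain ⟨z, hz, hclamp⟩ := hr.exists_eq_collapseGap hF t
  rw [hclamp, ← not_lt, clamp_pos, sub_pos, not_lt] at h
  exact hz.trans_le (max_le (min_le_right _ _) (by linarith))

lemma le_of_twoPointCdf_pos (hr : IsEquivariant r) (hF : F ∈ mSet) {t : ℝ}
    (h : 0 < r (twoPointCdf (F t))) : t ≤ r F := by
  obtain ⟨z, hz, hclamp⟩ := hr.exists_eq_collapseGap hF t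
  rw [hclamp, clamp_pos, sub_pos] at h
  exact (le_max_of_le_left (le_min h.le le_rfl)).trans_eq hz.symm

lemma preimage_eq_Ici_or_Ioi (hr : IsEquivariant r) (hF : F ∈ mSet) :
    F ⁻¹' {s | r (twoPointCdf s) ≤ 0} = Ici (r F) ∨
      F ⁻¹' {s | r (twoPointCdf s) ≤ 0} = Ioi (r F) := by
  refine mem_Ici_Ioi_of_subset_of_subset (fun t ht => ?_)
    fun t ht => hr.le_of_twoPointCdf_nonpos hF ht
  by_contra hpos
  exact (mem_Ioi.1 ht).not_ge (hr.le_of_twoPointCdf_pos hF (not_le.1 hpos))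

lemma eq_sInf_preimage (hr : IsEquivariant r) (hF : F ∈ mSet) :
    r F = sInf (F ⁻¹' {s | r (twoPointCdf s) ≤ 0}) := by
  rcases hr.preimage_eq_Ici_or_Ioi hF with h | h
  · rw [h, csInf_Ici]
  · rw [h, csInf_Ioi]

lemma isQuantile (hr : IsEquivariant r) : IsQuantile r := by
  set S : Set ℝ := {s | r (twoPointCdf s) ≤ 0}
  have hsInf : ∀ F ∈ mSet, r F = sInf (F ⁻¹' (clamp ⁻¹' S)) := fun F hF => by
    rw [← preimage_comp, clamp_comp_of_mem_m0Set (mSet_subset_m0Set hF), hr.eq_sInf_preimage hF]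
  rcases hr.preimage_eq_Ici_or_Ioi clamp_mem_mSet with hS | hS
  · exact .inl ⟨r clamp, mem_Ioc_of_preimage_clamp_eq_Ici hS, fun F hF => by
      rw [hsInf F hF, hS]; rfl⟩
  · exact .inr ⟨r clamp, mem_Ico_of_preimage_clamp_eq_Ioi hS, fun F hF => by
      rw [hsInf F hF, hS]; rfl⟩

end IsEquivariant

/-! ### Conjugation of utility functions -/

lemma exists_isUF_apply_eq {x y a b : ℝ} (hxy : x < y) (hab : a ≤ b) :
    ∃ u, IsUF u ∧ u x = a ∧ u y = b := by
  have hslope : 0 ≤ (b - a) / (y - x) := div_nonneg (by linarith) (by linarith)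
  refine ⟨fun z => a + (b - a) / (y - x) * (z - x), ⟨fun z w h => ?_, by fun_prop⟩, by simp, ?_⟩
  · exact add_le_add le_rfl (mul_le_mul_of_nonneg_left (sub_le_sub_right h x) hslope)
  · beta_reduce
    rw [div_mul_cancel₀ _ (sub_pos.2 hxy).ne', add_sub_cancel]

lemma injective_of_isUF_semiconj {β : Type*} {g : ℝ → β}
    (hg : ∀ u, IsUF u → ∃ ψ : β → β, Function.Semiconj g u ψ) {a b : ℝ} (hab : g a ≠ g b) :
    Function.Injective g := by
  refine .of_lt_imp_ne fun x y hxy hgxy => ?_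
  have hconst (c d : ℝ) (hcd : c ≤ d) : g c = g d := by
    obtain ⟨u, hu, rfl, rfl⟩ := exists_isUF_apply_eq hxy hcd
    obtain ⟨ψ, hψ⟩ := hg u hu
    rw [hψ x, hψ y, hgxy]
  rcases le_total a b with h | h
  · exact hab (hconst a b h)
  · exact hab (hconst b a h).symm

lemma monotone_or_antitone_of_isUF_semiconj {β : Type*} [LinearOrder β] {g : ℝ → β}
    (hg : ∀ u, IsUF u → ∃ ψ : β → β, Monotone ψ ∧ Function.Semiconj g u ψ) :
    Monotone g ∨ Antitone g := by
  by_cases hlt : ∃ x y, x < y ∧ g x < g y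
  · obtain ⟨x, y, hxy, hgxy⟩ := hlt
    refine .inl fun a b hab => ?_
    obtain ⟨u, hu, rfl, rfl⟩ := exists_isUF_apply_eq hxy hab
    obtain ⟨ψ, hmono, hψ⟩ := hg u hu
    rw [hψ x, hψ y]
    exact hmono hgxy.le
  · push Not at hlt
    exact .inr (antitone_iff_forall_lt.2 fun x y => hlt x y)

lemma continuous_of_strictMono_or_strictAnti {α β : Type*} [LinearOrder α] [TopologicalSpace α]
    [OrderTopology α] [LinearOrder β] [TopologicalSpace β] [OrderTopology β] [DenselyOrdered β]
    {f : α → β} (hf : StrictMono f ∨ StrictAnti f) (hsurj : Function.Surjective f) :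
    Continuous f := by
  rcases hf with hf | hf
  · exact hf.monotone.continuous_of_surjective hsurj
  · exact hf.antitone.dual_right.continuous_of_surjective (OrderDual.toDual.surjective.comp hsurj)

lemma strictMono_or_strictAnti_symm {α β : Type*} [LinearOrder α] [LinearOrder β] {e : α ≃ β}
    (he : StrictMono e ∨ StrictAnti e) : StrictMono e.symm ∨ StrictAnti e.symm := by
  refine he.imp (fun he a b hab => ?_) fun he a b hab => ?_
  · rwa [← he.lt_iff_lt, e.apply_symm_apply, e.apply_symm_apply]
  · rwa [← he.lt_iff_gt, e.apply_symm_apply, e.apply_symm_apply]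

lemma IsUF.conj {u : ℝ → ℝ} (hu : IsUF u) {e : ℝ ≃ ℝ} (he : StrictMono e ∨ StrictAnti e) :
    IsUF (e ∘ u ∘ e.symm) := by
  have he' := strictMono_or_strictAnti_symm he
  refine ⟨?_, (continuous_of_strictMono_or_strictAnti he e.surjective).comp
    (hu.2.comp (continuous_of_strictMono_or_strictAnti he' e.symm.surjective))⟩
  rcases he with he | he
  · exact he.monotone.comp (hu.1.comp fun a b hab => by
      rwa [← he.le_iff_le, e.apply_symm_apply, e.apply_symm_apply])
  · exact he.antitone.comp (hu.1.comp_antitone fun a b hab => by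
      rwa [← he.le_iff_ge, e.apply_symm_apply, e.apply_symm_apply])

/-! ### Functionals commuting with utility transforms -/

/-- A functional on distributions commutes with the utility transforms: `F_U ∘ ρ = ρ ∘ 𝒰` as sets
of functionals on `mSet`. -/
def CommutesWithUtilityT (ρ : (ℝ → ℝ) → ℝ) : Prop :=
  (∀ u : ℝ → ℝ, IsUF u → ∃ ψ : ℝ → ℝ, IsUF ψ ∧ ∀ F ∈ mSet, ψ (ρ F) = ρ (utilityT u F)) ∧
    (∀ ψ : ℝ → ℝ, IsUF ψ → ∃ u : ℝ → ℝ, IsUF u ∧ ∀ F ∈ mSet, ψ (ρ F) = ρ (utilityT u F))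

lemma IsEquivariant.commutesWithUtilityT {ρ q : (ℝ → ℝ) → ℝ} (hq : IsEquivariant q) {e : ℝ ≃ ℝ}
    (he : StrictMono e ∨ StrictAnti e) (hρ : ∀ F ∈ mSet, ρ F = e (q F)) :
    CommutesWithUtilityT ρ := by
  have hρT : ∀ u, IsUF u → ∀ F ∈ mSet, ρ (utilityT u F) = e (u (q F)) := fun u hu F hF => by
    rw [hρ _ (utilityT_mem_mSet hF hu.1), hq u hu F hF]
  refine ⟨fun u hu => ⟨e ∘ u ∘ e.symm, hu.conj he, fun F hF => ?_⟩, fun ψ hψ => ?_⟩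
  · simp [hρT u hu F hF, hρ F hF]
  · have hu : IsUF (e.symm ∘ ψ ∘ e) := hψ.conj (strictMono_or_strictAnti_symm he)
    exact ⟨_, hu, fun F hF => by simp [hρT _ hu F hF, hρ F hF]⟩

lemma utilityT_const {F : ℝ → ℝ} (hF : F ∈ m0Set) (c : ℝ) :
    utilityT (fun _ => c) F = cdf (Measure.dirac c) := by
  obtain ⟨μ, _, rfl⟩ := exists_cdf_eq hF
  rw [utilityT_cdf μ aemeasurable_const, Measure.map_const, measure_univ, one_smul]

lemma utilityT_cdf_dirac {u : ℝ → ℝ} (hu : Measurable u) (a : ℝ) :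
    utilityT u (cdf (Measure.dirac a)) = cdf (Measure.dirac (u a)) := by
  rw [utilityT_cdf _ hu.aemeasurable, Measure.map_dirac]

lemma cdf_dirac_mem_mSet (a : ℝ) : (cdf (Measure.dirac a) : ℝ → ℝ) ∈ mSet := by
  rw [← utilityT_const (mSet_subset_m0Set clamp_mem_mSet) a]
  exact utilityT_mem_mSet clamp_mem_mSet monotone_const

/-- The value of a functional at the point mass at `x`, as a function of `x`. -/
def pointValue (ρ : (ℝ → ℝ) → ℝ) (x : ℝ) : ℝ := ρ (cdf (Measure.dirac x))

namespace CommutesWithUtilityT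

variable {ρ : (ℝ → ℝ) → ℝ}

lemma exists_semiconj_pointValue (hρ : CommutesWithUtilityT ρ) {u : ℝ → ℝ} (hu : IsUF u) :
    ∃ ψ, Monotone ψ ∧ Function.Semiconj (pointValue ρ) u ψ ∧
      ∀ F ∈ mSet, ρ (utilityT u F) = ψ (ρ F) := by
  obtain ⟨ψ, hψ, hcomm⟩ := hρ.1 u hu
  refine ⟨ψ, hψ.1, fun x => ?_, fun F hF => (hcomm F hF).symm⟩
  rw [pointValue, pointValue, hcomm _ (cdf_dirac_mem_mSet x), utilityT_cdf_dirac hu.1.measurable]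

lemma surjective_pointValue (hρ : CommutesWithUtilityT ρ) :
    Function.Surjective (pointValue ρ) := fun c => by
  obtain ⟨u, hu, hcomm⟩ := hρ.2 (fun _ => c) ⟨monotone_const, continuous_const⟩
  refine ⟨u 0, ?_⟩
  rw [pointValue, ← utilityT_cdf_dirac hu.1.measurable, ← hcomm _ (cdf_dirac_mem_mSet 0)]

lemma strictMono_or_strictAnti_pointValue (hρ : CommutesWithUtilityT ρ) :
    StrictMono (pointValue ρ) ∨ StrictAnti (pointValue ρ) := by
  obtain ⟨a, ha⟩ := hρ.surjective_pointValue 0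
  obtain ⟨b, hb⟩ := hρ.surjective_pointValue 1
  have hinj : Function.Injective (pointValue ρ) :=
    injective_of_isUF_semiconj (a := a) (b := b)
      (fun u hu => (hρ.exists_semiconj_pointValue hu).imp fun _ h => h.2.1)
      (by rw [ha, hb]; exact zero_ne_one)
  exact (monotone_or_antitone_of_isUF_semiconj fun u hu =>
    (hρ.exists_semiconj_pointValue hu).imp fun _ h => ⟨h.1, h.2.1⟩).imp
      (fun h => h.strictMono_of_injective hinj) fun h => h.strictAnti_of_injective hinj

lemma isEquivariant_symm_comp (hρ : CommutesWithUtilityT ρ) {e : ℝ ≃ ℝ}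
    (he : ⇑e = pointValue ρ) : IsEquivariant (e.symm ∘ ρ) := by
  intro u hu F hF
  obtain ⟨ψ, -, hsemi, hcomm⟩ := hρ.exists_semiconj_pointValue hu
  rw [← he] at hsemi
  apply e.injective
  -- `F` has the same value of `ρ` as the point mass at `e.symm (ρ F)`
  calc e (e.symm (ρ (utilityT u F))) = ψ (ρ F) := by rw [e.apply_symm_apply, hcomm F hF]
    _ = ψ (e (e.symm (ρ F))) := by rw [e.apply_symm_apply]
    _ = e (u (e.symm (ρ F))) := (hsemi _).symm

end CommutesWithUtilityT

theorem commutesWithUtilityT_iff {ρ : (ℝ → ℝ) → ℝ} :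
    CommutesWithUtilityT ρ ↔
      ∃ h : ℝ → ℝ, (StrictMono h ∨ StrictAnti h) ∧ Continuous h ∧ Function.Surjective h ∧
        ∃ q, IsEquivariant q ∧ ∀ F ∈ mSet, ρ F = h (q F) := by
  constructor
  · intro hρ
    have hstrict := hρ.strictMono_or_strictAnti_pointValue
    have hsurj := hρ.surjective_pointValue
    let e := Equiv.ofBijective (pointValue ρ)
      ⟨hstrict.elim StrictMono.injective StrictAnti.injective, hsurj⟩
    exact ⟨e, hstrict, continuous_of_strictMono_or_strictAnti hstrict hsurj, hsurj,
      e.symm ∘ ρ, hρ.isEquivariant_symm_comp rfl, fun F _ => (e.apply_symm_apply (ρ F)).symm⟩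
  · rintro ⟨h, hstrict, -, hsurj, q, hq, hρ⟩
    let e := Equiv.ofBijective h ⟨hstrict.elim StrictMono.injective StrictAnti.injective, hsurj⟩
    exact hq.commutesWithUtilityT (e := e) hstrict hρ

/-- A functional `ρ : M → ℝ` commutes with the set `𝒰` of utility transforms,
in the sense `F_U ∘ ρ = ρ ∘ 𝒰`, if and only if `ρ = h ∘ ρ̂` for some strictly
monotone, continuous, surjective `h : ℝ → ℝ` and some quantile functional `ρ̂`
(a left quantile at some fixed `p ∈ (0,1]` or a right quantile at some fixed
`p ∈ [0,1)`). -/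
theorem stmt5 (ρ : (ℝ → ℝ) → ℝ) :
    ((∀ u : ℝ → ℝ, IsUF u → ∃ ψ : ℝ → ℝ, IsUF ψ ∧
        ∀ F ∈ mSet, ψ (ρ F) = ρ (utilityT u F)) ∧
      (∀ ψ : ℝ → ℝ, IsUF ψ → ∃ u : ℝ → ℝ, IsUF u ∧
        ∀ F ∈ mSet, ψ (ρ F) = ρ (utilityT u F))) ↔
      ∃ h : ℝ → ℝ, (StrictMono h ∨ StrictAnti h) ∧ Continuous h ∧
        Function.Surjective h ∧
        ((∃ p ∈ Set.Ioc (0:ℝ) 1, ∀ F ∈ mSet, ρ F = h (leftQ F p)) ∨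
          (∃ p ∈ Set.Ico (0:ℝ) 1, ∀ F ∈ mSet, ρ F = h (rightQ F p))) := by
  refine (commutesWithUtilityT_iff (ρ := ρ)).trans <| exists_congr fun h =>
    and_congr_right' <| and_congr_right' <| and_congr_right' ?_
  constructor
  · rintro ⟨q, hq, hρ⟩
    exact hq.isQuantile.imp
      (fun ⟨p, hp, hqp⟩ => ⟨p, hp, fun F hF => by rw [hρ F hF, hqp F hF]⟩)
      fun ⟨p, hp, hqp⟩ => ⟨p, hp, fun F hF => by rw [hρ F hF, hqp F hF]⟩
  · rintro (⟨p, hp, hρ⟩ | ⟨p, hp, hρ⟩)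
    · exact ⟨_, IsQuantile.isEquivariant (.inl ⟨p, hp, fun _ _ => rfl⟩), hρ⟩
    · exact ⟨_, IsQuantile.isEquivariant (.inr ⟨p, hp, fun _ _ => rfl⟩), hρ⟩
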